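/- Let χ be a non-principal Dirichlet character modulo a prime p ≥ 10^{19}, and let q_1 < q_2 be the two smallest prime non-residues of χ. Then q_2 < 53·p^{1/4}·(log p)². -/

import Mathlib

/-!
Suppose every prime up to `H`, except the prime `u`, is mapped to `1` by `χ`. Then every `n ≤ H`
prime to `u` lies in the kernel of `χ`, a group of order `g < p / 2`, and hence satisfies
`n ^ g = 1`. If `z` lies just above a fraction `t * p / q` with a small denominator `q` prime to
`u`, then the numbers `q * (z + i) - t * p` are small for `i < h`, so that `z, z + 1, …` all have
`g`-th power `1`. Distinct fractions are far apart, so there are many such `z`. (If `u` is small,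
progressions with difference `u` replace blocks of consecutive integers, to stay away from
the multiples of `u`.)

Weil's bound for character sums would limit the number of `x` for which `(x - a i) ^ g` takes the
same value `c` for all `i < h`; Stepanov's method gives an elementary bound which is good enough.
The auxiliary polynomial is `∑ I, P I * (∏ i ∈ I, (X - a i)) ^ g`, over all sets `I` of indices,
with the `P I` of low degree. A count of coefficients makes it vanish to high order at all these
`x`, and a Wronskian shows that it is not zero. Comparing the two bounds with `h` about
`log p / log 4` forces `H` to be at most a multiple of `p ^ (1 / 4) * (log p) ^ 2`.
-/

section DifferentialElimination

open Polynomial Matrix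

variable {R : Type*} [CommRing R]

/-- The `R`-linear operator `P ↦ T * P' + μ * P` on `R[X]`. When `T * F' = μ * F`, it is the
operator `P ↦ T * P'` conjugated by multiplication by `F`. -/
noncomputable def twistedDerivative (T μ : R[X]) : Module.End R R[X] :=
  LinearMap.mulLeft R T * derivative + LinearMap.mulLeft R μ

lemma twistedDerivative_apply (T μ P : R[X]) :
    twistedDerivative T μ P = T * derivative P + μ * P := rfl

lemma twistedDerivative_mul (T μ P Q : R[X]) :
    twistedDerivative T μ (P * Q) = T * derivative P * Q + P * twistedDerivative T μ Q := by
  simp only [twistedDerivative_apply, derivative_mul]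
  ring

/-- The array whose row `k` is the family of `k`-th iterated twisted derivatives of the `P i`. -/
noncomputable def twistedJet {ι : Type*} (T : R[X]) (μ P : ι → R[X]) (k : ℕ) (i : ι) : R[X] :=
  (twistedDerivative T (μ i) ^ k) (P i)

lemma twistedJet_zero {ι : Type*} (T : R[X]) (μ P : ι → R[X]) : twistedJet T μ P 0 = P := rfl

lemma twistedJet_succ {ι : Type*} (T : R[X]) (μ P : ι → R[X]) (k : ℕ) (i : ι) :
    twistedJet T μ P (k + 1) i = twistedDerivative T (μ i) (twistedJet T μ P k i) := by
  rw [twistedJet, pow_succ', Module.End.mul_apply, twistedJet]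

lemma twistedDerivative_zero_pow_mul {ι : Type*} {T : R[X]} {μ F : ι → R[X]}
    (hF : ∀ i, T * derivative (F i) = μ i * F i) (P : ι → R[X]) (k : ℕ) (i : ι) :
    (twistedDerivative T 0 ^ k) (P i * F i) = twistedJet T μ P k i * F i := by
  induction k with
  | zero => rfl
  | succ k ih =>
    rw [pow_succ', Module.End.mul_apply, ih, twistedDerivative_mul, twistedJet_succ,
      twistedDerivative_apply, twistedDerivative_apply]
    linear_combination twistedJet T μ P k i * hF i

lemma twistedDerivative_zero_pow_sum {ι : Type*} (s : Finset ι) {T : R[X]} {μ F : ι → R[X]}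
    (hF : ∀ i, T * derivative (F i) = μ i * F i) (P : ι → R[X]) (k : ℕ) :
    (twistedDerivative T 0 ^ k) (∑ i ∈ s, P i * F i) = ∑ i ∈ s, twistedJet T μ P k i * F i := by
  simp only [map_sum, twistedDerivative_zero_pow_mul hF]

lemma natDegree_twistedJet_le {ι : Type*} {T : R[X]} {μ P : ι → R[X]} {d n : ℕ}
    (hT : T.natDegree ≤ d) {i : ι} (hμ : (μ i).natDegree ≤ d) (hP : (P i).natDegree ≤ n) (k : ℕ) :
    (twistedJet T μ P k i).natDegree ≤ n + k * d := by
  induction k with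
  | zero => simpa [twistedJet_zero] using hP
  | succ k ih =>
    rw [twistedJet_succ, twistedDerivative_apply]
    have hderiv := natDegree_derivative_le (twistedJet T μ P k i)
    refine natDegree_add_le_of_degree_le (natDegree_mul_le.trans ?_) (natDegree_mul_le.trans ?_) <;>
      rw [add_mul] <;> omega

lemma natDegree_det_le_card_mul {n : Type*} [Fintype n] [DecidableEq n] {M : Matrix n n R[X]}
    {d : ℕ} (hM : ∀ i j, (M i j).natDegree ≤ d) : M.det.natDegree ≤ Fintype.card n * d := by
  rw [Matrix.det_apply]
  refine natDegree_sum_le_of_forall_le _ _ fun σ _ => (natDegree_smul_le _ _).trans ?_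
  refine (natDegree_prod_le _ _).trans ((Finset.sum_le_sum fun i _ => hM _ _).trans ?_)
  simp

/-- The square matrix formed by the first `r` rows of the infinite array `A` and the columns
selected by `e`. -/
def initialMatrix {ι S : Type*} {r : ℕ} (A : ℕ → ι → S) (e : Fin r → ι) :
    Matrix (Fin r) (Fin r) S :=
  of fun i j => A i (e j)

lemma injective_of_det_initialMatrix_ne_zero {ι : Type*} {A : ℕ → ι → R} {r : ℕ} {e : Fin r → ι}
    (he : (initialMatrix A e).det ≠ 0) : Function.Injective e := by
  intro j k hjk
  by_contra hne
  exact he (det_zero_of_column_eq hne fun i => by simp [initialMatrix, hjk])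

lemma exists_maximal_initialMatrix [Nontrivial R] {ι : Type*} [Finite ι] (A : ℕ → ι → R) :
    ∃ (r : ℕ) (e : Fin r → ι), (initialMatrix A e).det ≠ 0 ∧
      ∀ i, (initialMatrix A (Fin.snoc e i : Fin (r + 1) → ι)).det = 0 := by
  by_contra! hext
  have hall (r : ℕ) : ∃ e : Fin r → ι, (initialMatrix A e).det ≠ 0 := by
    induction r with
    | zero => exact ⟨Fin.elim0, by simp⟩
    | succ r ih =>
      obtain ⟨e, he⟩ := ih
      exact (hext r e he).imp' (fun i => Fin.snoc e i) fun _ hi => hi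
  obtain ⟨e, he⟩ := hall (Nat.card ι + 1)
  have := Nat.card_le_card_of_injective e (injective_of_det_initialMatrix_ne_zero he)
  simp at this

/-- The coordinate `i` of the combination, with coefficients the `j`-th row of the adjugate of
`initialMatrix A e`, of the first `r` rows of `A`. -/
noncomputable def cramerRow {ι : Type*} {r : ℕ} (A : ℕ → ι → R) (e : Fin r → ι) (j : Fin r)
    (i : ι) : R :=
  (initialMatrix A e).cramer (fun k => A k i) j

lemma cramerRow_eq_sum {ι : Type*} {r : ℕ} (A : ℕ → ι → R) (e : Fin r → ι) (j : Fin r) (i : ι) :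
    cramerRow A e j i = ∑ k : Fin r, (initialMatrix A e).adjugate j k * A k i := by
  rw [cramerRow, cramer_eq_adjugate_mulVec]
  rfl

lemma cramerRow_apply_column {ι : Type*} {r : ℕ} (A : ℕ → ι → R) (e : Fin r → ι) (j k : Fin r) :
    cramerRow A e j (e k) = if j = k then (initialMatrix A e).det else 0 := by
  have := congrFun (congrFun (adjugate_mul (initialMatrix A e)) j) k
  simpa [cramerRow_eq_sum, mul_apply, initialMatrix, one_apply] using this

lemma natDegree_det_initialMatrix_le {ι : Type*} {A : ℕ → ι → R[X]} {r d : ℕ} {e : Fin r → ι}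
    (hA : ∀ (k : Fin r) i, (A k i).natDegree ≤ d) :
    (initialMatrix A e).det.natDegree ≤ r * d := by
  simpa using natDegree_det_le_card_mul (M := initialMatrix A e) fun k j => hA k (e j)

lemma natDegree_cramerRow_le {ι : Type*} {A : ℕ → ι → R[X]} {r d : ℕ} {e : Fin r → ι}
    (hA : ∀ (k : Fin r) i, (A k i).natDegree ≤ d) (j : Fin r) (i : ι) :
    (cramerRow A e j i).natDegree ≤ r * d := by
  rw [cramerRow, cramer_apply]
  refine (natDegree_det_le_card_mul (d := d) fun k l => ?_).trans (by simp)
  rw [updateCol_apply]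
  split_ifs
  exacts [hA k i, hA k (e l)]

lemma sum_cramerRow_mul_eq_zero {ι : Type*} [Fintype ι] {T : R[X]} {μ P F : ι → R[X]}
    (hF : ∀ i, T * derivative (F i) = μ i * F i) (hsum : ∑ i, P i * F i = 0) {r : ℕ}
    (e : Fin r → ι) (j : Fin r) : ∑ i, cramerRow (twistedJet T μ P) e j i * F i = 0 := by
  have hrow (k : ℕ) : ∑ i, twistedJet T μ P k i * F i = 0 := by
    rw [← twistedDerivative_zero_pow_sum _ hF, hsum, map_zero]
  simp only [cramerRow_eq_sum, Finset.sum_mul, mul_assoc]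
  rw [Finset.sum_comm]
  simp only [← Finset.mul_sum, hrow, mul_zero, Finset.sum_const_zero]

lemma sum_snoc_add_cons_mul {r : ℕ} (x y : Fin r → R) (f : ℕ → R) :
    ∑ k : Fin (r + 1), ((Fin.snoc x 0 : Fin (r + 1) → R) + Fin.cons 0 y : Fin (r + 1) → R) k * f k =
      ∑ k : Fin r, (x k * f k + y k * f (k + 1)) := by
  simp only [Pi.add_apply, add_mul, Finset.sum_add_distrib]
  rw [Fin.sum_univ_castSucc, Fin.sum_univ_succ (fun k => (Fin.cons 0 y : Fin (r + 1) → R) k * f k)]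
  simp

variable [IsDomain R]

lemma vecMul_eq_zero_of_det_submatrix_castSucc_ne_zero {r : ℕ}
    {A : Matrix (Fin (r + 1)) (Fin (r + 1)) R} (hA : A.det = 0)
    (hminor : (A.submatrix Fin.castSucc Fin.castSucc).det ≠ 0) {b : Fin (r + 1) → R}
    (hb : ∀ j : Fin r, (b ᵥ* A) j.castSucc = 0) : b ᵥ* A = 0 := by
  obtain ⟨y, hy, hAy⟩ := exists_mulVec_eq_zero_iff.mpr hA
  have hlast : y (Fin.last r) ≠ 0 := by
    intro hlast
    have hinit : y ∘ Fin.castSucc = 0 := eq_zero_of_mulVec_eq_zero hminor <| by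
      funext i
      simpa [mulVec, dotProduct, Fin.sum_univ_castSucc, hlast] using congrFun hAy i.castSucc
    exact hy (funext (Fin.lastCases hlast fun j => congrFun hinit j))
  have hpair : (b ᵥ* A) (Fin.last r) * y (Fin.last r) = 0 := by
    have hbAy : (b ᵥ* A) ⬝ᵥ y = 0 := by rw [← dotProduct_mulVec, hAy, dotProduct_zero]
    simpa [dotProduct, Fin.sum_univ_castSucc, hb] using hbAy
  exact funext (Fin.lastCases ((mul_eq_zero.mp hpair).resolve_right hlast) hb)

lemma eq_zero_of_sum_mul_eq_zero_on_columns {ι : Type*} {A : ℕ → ι → R} {r : ℕ} {e : Fin r → ι}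
    (he : (initialMatrix A e).det ≠ 0) {i : ι}
    (hi : (initialMatrix A (Fin.snoc e i : Fin (r + 1) → ι)).det = 0) {b : Fin (r + 1) → R}
    (hb : ∀ j, ∑ k, b k * A k (e j) = 0) : ∑ k, b k * A k i = 0 := by
  have hminor : ((initialMatrix A (Fin.snoc e i : Fin (r + 1) → ι)).submatrix
      Fin.castSucc Fin.castSucc).det ≠ 0 := by
    convert he using 2
    ext k j
    simp [initialMatrix]
  have hvec := vecMul_eq_zero_of_det_submatrix_castSucc_ne_zero hi hminor (b := b) fun j => by
    simpa [vecMul, dotProduct, initialMatrix] using hb j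
  simpa [vecMul, dotProduct, initialMatrix] using congrFun hvec (Fin.last r)

variable {ι : Type*} {T : R[X]} {μ P : ι → R[X]}

lemma det_mul_twistedDerivative_cramerRow {r : ℕ} {e : Fin r → ι}
    (he : (initialMatrix (twistedJet T μ P) e).det ≠ 0) {i : ι}
    (hi : (initialMatrix (twistedJet T μ P) (Fin.snoc e i : Fin (r + 1) → ι)).det = 0)
    (j : Fin r) :
    (initialMatrix (twistedJet T μ P) e).det *
        twistedDerivative T (μ i) (cramerRow (twistedJet T μ P) e j i) =
      twistedDerivative T (μ (e j)) (initialMatrix (twistedJet T μ P) e).det *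
        cramerRow (twistedJet T μ P) e j i := by
  set M := (initialMatrix (twistedJet T μ P) e).det
  set a := (initialMatrix (twistedJet T μ P) e).adjugate j with ha
  set c := twistedDerivative T (μ (e j)) M
  let b : Fin (r + 1) → R[X] :=
    Fin.snoc (fun k => M * (T * derivative (a k)) - c * a k) 0 + Fin.cons 0 (fun k => M * a k)
  have hdiff (i : ι) : M * twistedDerivative T (μ i) (cramerRow (twistedJet T μ P) e j i) -
      c * cramerRow (twistedJet T μ P) e j i = ∑ k, b k * twistedJet T μ P k i := by
    rw [sum_snoc_add_cons_mul _ _ fun k => twistedJet T μ P k i]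
    simp only [cramerRow_eq_sum, map_sum, twistedDerivative_mul, Finset.mul_sum,
      ← Finset.sum_sub_distrib, twistedJet_succ, ← ha]
    exact Finset.sum_congr rfl fun k _ => by ring
  -- The combination vanishes on the selected columns, hence also on the dependent column `i`.
  rw [← sub_eq_zero, hdiff]
  refine eq_zero_of_sum_mul_eq_zero_on_columns he hi fun k => ?_
  rw [← hdiff, cramerRow_apply_column]
  split_ifs with hjk
  · simp only [← hjk, c, M, mul_comm, sub_self]
  · simp

lemma wronskian_det_mul_cramerRow_mul_eq_zero {F : ι → R[X]} (hT : T ≠ 0)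
    (hF : ∀ i, T * derivative (F i) = μ i * F i) {r : ℕ} {e : Fin r → ι}
    (he : (initialMatrix (twistedJet T μ P) e).det ≠ 0) {i : ι}
    (hi : (initialMatrix (twistedJet T μ P) (Fin.snoc e i : Fin (r + 1) → ι)).det = 0)
    (j : Fin r) :
    wronskian ((initialMatrix (twistedJet T μ P) e).det * F (e j))
      (cramerRow (twistedJet T μ P) e j i * F i) = 0 := by
  have hflat := det_mul_twistedDerivative_cramerRow he hi j
  refine (mul_eq_zero.mp ?_).resolve_left hT
  simp only [twistedDerivative_apply] at hflat
  simp only [wronskian, derivative_mul]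
  linear_combination F (e j) * F i * hflat +
    (initialMatrix (twistedJet T μ P) e).det * F (e j) * cramerRow (twistedJet T μ P) e j i * hF i -
    (initialMatrix (twistedJet T μ P) e).det * F i * cramerRow (twistedJet T μ P) e j i * hF (e j)

theorem exists_wronskian_eq_zero [Fintype ι] {F : ι → R[X]} {d : ℕ} (hT : T ≠ 0)
    (hF : ∀ i, T * derivative (F i) = μ i * F i) (hF₀ : ∀ i, F i ≠ 0) (hP : P ≠ 0)
    (hsum : ∑ i, P i * F i = 0)
    (hd : ∀ k < Fintype.card ι, ∀ i, (twistedJet T μ P k i).natDegree ≤ d) :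
    ∃ (i j : ι) (M N : R[X]), i ≠ j ∧ M ≠ 0 ∧ N ≠ 0 ∧ M.natDegree ≤ Fintype.card ι * d ∧
      N.natDegree ≤ Fintype.card ι * d ∧ wronskian (M * F i) (N * F j) = 0 := by
  obtain ⟨r, e, he, hmax⟩ := exists_maximal_initialMatrix (twistedJet T μ P)
  have hr : r ≤ Fintype.card ι := by
    simpa using Fintype.card_le_of_injective e (injective_of_det_initialMatrix_ne_zero he)
  have hrpos : 0 < r := by
    by_contra! hr₀
    obtain rfl : r = 0 := Nat.le_zero.mp hr₀
    exact hP (funext fun i => by simpa [initialMatrix, twistedJet_zero, Fin.snoc] using hmax i)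
  let j : Fin r := ⟨0, hrpos⟩
  have hrelation := sum_cramerRow_mul_eq_zero hF hsum e j
  obtain ⟨i, hij, hi⟩ : ∃ i, i ≠ e j ∧ cramerRow (twistedJet T μ P) e j i ≠ 0 := by
    by_contra! hzero
    rw [Fintype.sum_eq_single (e j) fun i hi => by rw [hzero i hi, zero_mul],
      cramerRow_apply_column, if_pos rfl] at hrelation
    exact mul_ne_zero he (hF₀ _) hrelation
  have hdr (k : Fin r) (i : ι) : (twistedJet T μ P k i).natDegree ≤ d := hd k (by omega) i
  have hrd : r * d ≤ Fintype.card ι * d := Nat.mul_le_mul_right d hr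
  exact ⟨e j, i, _, _, hij.symm, he, hi, (natDegree_det_initialMatrix_le hdr).trans hrd,
    (natDegree_cramerRow_le hdr j i).trans hrd,
    wronskian_det_mul_cramerRow_mul_eq_zero hT hF he (hmax i) j⟩

end DifferentialElimination

section RootMultiplicity

open Polynomial

variable {K : Type*} [Field K]

lemma rootMultiplicity_le_natDegree {P : K[X]} (x : K) : P.rootMultiplicity x ≤ P.natDegree := by
  classical
  rw [← count_roots]
  exact (Multiset.count_le_card _ _).trans (card_roots' P)

lemma rootMultiplicity_pow (P : K[X]) (n : ℕ) (x : K) :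
    (P ^ n).rootMultiplicity x = n * P.rootMultiplicity x := by
  classical
  rw [← count_roots, roots_pow, Multiset.count_nsmul, count_roots]

lemma exists_eq_X_sub_C_pow_rootMultiplicity_mul {P : K[X]} (hP : P ≠ 0) (x : K) :
    ∃ Q : K[X], P = (X - C x) ^ P.rootMultiplicity x * Q ∧ Q.eval x ≠ 0 := by
  obtain ⟨Q, hPQ, hQ⟩ := exists_eq_pow_rootMultiplicity_mul_and_not_dvd P hP x
  exact ⟨Q, hPQ, mt dvd_iff_isRoot.mpr hQ⟩

lemma X_sub_C_mul_derivative_X_sub_C_pow_mul (x : K) (m : ℕ) (Q : K[X]) :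
    (X - C x) * derivative ((X - C x) ^ m * Q) =
      (X - C x) ^ m * ((m : K[X]) * Q + (X - C x) * derivative Q) := by
  cases m with
  | zero => simp
  | succ m =>
    simp only [derivative_mul, derivative_X_sub_C_pow, Nat.add_sub_cancel, map_natCast]
    ring

lemma rootMultiplicity_modEq_of_wronskian_eq_zero (p : ℕ) [CharP K p] {P Q : K[X]} (hP : P ≠ 0)
    (hQ : Q ≠ 0) (hPQ : wronskian P Q = 0) (x : K) :
    P.rootMultiplicity x ≡ Q.rootMultiplicity x [MOD p] := by
  obtain ⟨U, hPU, hU⟩ := exists_eq_X_sub_C_pow_rootMultiplicity_mul hP x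
  obtain ⟨V, hQV, hV⟩ := exists_eq_X_sub_C_pow_rootMultiplicity_mul hQ x
  set m := P.rootMultiplicity x
  set n := Q.rootMultiplicity x
  have hP' := X_sub_C_mul_derivative_X_sub_C_pow_mul x m U
  have hQ' := X_sub_C_mul_derivative_X_sub_C_pow_mul x n V
  rw [← hPU] at hP'
  rw [← hQV] at hQ'
  have hcancel : U * ((n : K[X]) * V + (X - C x) * derivative V) -
      ((m : K[X]) * U + (X - C x) * derivative U) * V = 0 := by
    refine (mul_eq_zero.mp ?_).resolve_left (pow_ne_zero (m + n) (X_sub_C_ne_zero x))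
    rw [wronskian] at hPQ
    linear_combination (X - C x) * hPQ - P * hQ' + Q * hP' - (X - C x) ^ n *
      ((n : K[X]) * V + (X - C x) * derivative V) * hPU + (X - C x) ^ m *
      ((m : K[X]) * U + (X - C x) * derivative U) * hQV
  have heval := congrArg (eval x) hcancel
  simp only [eval_sub, eval_add, eval_mul, eval_natCast, eval_X, eval_C, sub_self, zero_mul,
    add_zero, eval_zero] at heval
  rw [← CharP.natCast_eq_natCast K p, eq_comm, ← sub_eq_zero]
  refine (mul_eq_zero.mp ?_).resolve_right (mul_ne_zero hU hV)
  linear_combination heval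

lemma le_rootMultiplicity_of_eval_twistedDerivative_zero_pow_eq_zero (p : ℕ) [CharP K p]
    {T : K[X]} {x : K} (hT : T.eval x ≠ 0) {D : ℕ} (hD : D ≤ p) {Ψ : K[X]} (hΨ : Ψ ≠ 0)
    (hroot : ∀ k < D, ((twistedDerivative T 0 ^ k) Ψ).eval x = 0) :
    D ≤ Ψ.rootMultiplicity x := by
  induction D generalizing Ψ with
  | zero => exact Nat.zero_le _
  | succ D ih =>
    have hΨx : Ψ.IsRoot x := hroot 0 D.succ_pos
    have hpos : 0 < Ψ.rootMultiplicity x := (rootMultiplicity_pos hΨ).mpr hΨx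
    by_cases hlarge : p ≤ Ψ.rootMultiplicity x
    · exact hD.trans hlarge
    have hcast : (Ψ.rootMultiplicity x : K) ≠ 0 := fun h =>
      hlarge (Nat.le_of_dvd hpos ((CharP.cast_eq_zero_iff K p _).mp h))
    have hderiv := derivative_rootMultiplicity_of_root_of_mem_nonZeroDivisors hΨx
      (mem_nonZeroDivisors_of_ne_zero hcast)
    have hΨ' : derivative Ψ ≠ 0 := fun h => by
      have : 1 < Ψ.rootMultiplicity x :=
        (one_lt_rootMultiplicity_iff_isRoot hΨ).mpr ⟨hΨx, by simp [h]⟩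
      rw [h, rootMultiplicity_zero] at hderiv
      omega
    have hT₀ : T ≠ 0 := by rintro rfl; simp at hT
    have hnabla : twistedDerivative T 0 Ψ = T * derivative Ψ := by simp [twistedDerivative_apply]
    have hne : T * derivative Ψ ≠ 0 := mul_ne_zero hT₀ hΨ'
    have hstep := ih (Nat.le_of_succ_le hD) (hnabla ▸ hne) fun k hk => by
      simpa only [pow_succ, Module.End.mul_apply] using hroot (k + 1) (Nat.succ_lt_succ hk)
    rw [hnabla, rootMultiplicity_mul hne, rootMultiplicity_eq_zero hT, hderiv] at hstep
    omega

end RootMultiplicity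

section NodalPowers

open Polynomial Lagrange

variable {K ι : Type*} [Field K] {a : ι → K}

lemma rootMultiplicity_nodal [DecidableEq ι] (ha : Function.Injective a) (I : Finset ι) (i : ι) :
    (nodal I a).rootMultiplicity (a i) = if i ∈ I then 1 else 0 := by
  classical
  have hroots : (nodal I a).roots = I.val.map a := by
    rw [← roots_multiset_prod_X_sub_C (I.val.map a), Multiset.map_map]
    rfl
  rw [← count_roots, hroots, Multiset.count_map_eq_count' a _ ha,
    Multiset.count_eq_of_nodup I.nodup]
  rfl

lemma rootMultiplicity_mul_nodal_pow [DecidableEq ι] (ha : Function.Injective a) {P : K[X]}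
    (hP : P ≠ 0) (I : Finset ι) (g : ℕ) (i : ι) :
    (P * nodal I a ^ g).rootMultiplicity (a i) =
      P.rootMultiplicity (a i) + if i ∈ I then g else 0 := by
  rw [rootMultiplicity_mul (mul_ne_zero hP (pow_ne_zero g nodal_ne_zero)), rootMultiplicity_pow,
    rootMultiplicity_nodal ha, mul_ite, mul_one, mul_zero]

lemma eq_of_wronskian_mul_nodal_pow_eq_zero (p : ℕ) [CharP K p] (ha : Function.Injective a)
    {g : ℕ} (hgp : 2 * g ≤ p) {M N : K[X]} (hM : M ≠ 0) (hN : N ≠ 0) (hMg : M.natDegree < g)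
    (hNg : N.natDegree < g) {I J : Finset ι}
    (hIJ : wronskian (M * nodal I a ^ g) (N * nodal J a ^ g) = 0) : I = J := by
  classical
  ext i
  have hmod := rootMultiplicity_modEq_of_wronskian_eq_zero p
    (mul_ne_zero hM (pow_ne_zero g nodal_ne_zero)) (mul_ne_zero hN (pow_ne_zero g nodal_ne_zero))
    hIJ (a i)
  rw [rootMultiplicity_mul_nodal_pow ha hM, rootMultiplicity_mul_nodal_pow ha hN] at hmod
  have hMi := (rootMultiplicity_le_natDegree (P := M) (a i)).trans_lt hMg
  have hNi := (rootMultiplicity_le_natDegree (P := N) (a i)).trans_lt hNg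
  have heq := hmod.eq_of_lt_of_lt (by split_ifs <;> omega) (by split_ifs <;> omega)
  split_ifs at heq <;> first | omega | tauto

variable [Fintype ι]

/-- The polynomial `μ` with `T * F' = μ * F` for `T = nodal univ a` and `F = nodal I a ^ g`. -/
noncomputable def nodalPowTwist [DecidableEq ι] (a : ι → K) (g : ℕ) (I : Finset ι) : K[X] :=
  (g : K[X]) * nodal Iᶜ a * derivative (nodal I a)

lemma nodal_univ_mul_derivative_nodal_pow [DecidableEq ι] (a : ι → K) (g : ℕ)
    (I : Finset ι) :
    nodal Finset.univ a * derivative (nodal I a ^ g) = nodalPowTwist a g I * nodal I a ^ g := by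
  have hsplit : nodal Finset.univ a = nodal I a * nodal Iᶜ a :=
    (Finset.prod_mul_prod_compl I _).symm
  cases g with
  | zero => simp [nodalPowTwist]
  | succ g =>
    rw [hsplit, derivative_pow_succ, nodalPowTwist]
    simp only [map_add, map_natCast, map_one]
    push_cast
    ring

lemma natDegree_nodalPowTwist_le [DecidableEq ι] (a : ι → K) (g : ℕ) (I : Finset ι) :
    (nodalPowTwist a g I).natDegree ≤ Fintype.card ι := by
  have hderiv := natDegree_derivative_le (nodal I a)
  have hcard := I.card_add_card_compl
  rw [natDegree_nodal] at hderiv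
  rw [nodalPowTwist, mul_assoc, ← nsmul_eq_mul]
  refine (natDegree_smul_le _ _).trans (natDegree_mul_le.trans ?_)
  rw [natDegree_nodal]
  omega

lemma natDegree_twistedJet_nodalPowTwist_le [DecidableEq ι] (g : ℕ) {P : Finset ι → K[X]}
    {m : ℕ} {I : Finset ι} (hP : (P I).natDegree ≤ m) (k : ℕ) :
    (twistedJet (nodal Finset.univ a) (nodalPowTwist a g) P k I).natDegree ≤
      m + k * Fintype.card ι :=
  natDegree_twistedJet_le natDegree_nodal.le (natDegree_nodalPowTwist_le a g I) hP k

lemma sum_mul_nodal_pow_ne_zero (p : ℕ) [CharP K p] (ha : Function.Injective a) {g m : ℕ}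
    (hgp : 2 * g ≤ p)
    (hmg : 2 ^ Fintype.card ι * (m + 2 ^ Fintype.card ι * Fintype.card ι) < g)
    {P : Finset ι → K[X]} (hP : P ≠ 0) (hPm : ∀ I, (P I).natDegree ≤ m) :
    ∑ I, P I * nodal I a ^ g ≠ 0 := by
  classical
  intro hsum
  have hdegree (k : ℕ) (hk : k < Fintype.card (Finset ι)) (I : Finset ι) :
      (twistedJet (nodal Finset.univ a) (nodalPowTwist a g) P k I).natDegree ≤
        m + 2 ^ Fintype.card ι * Fintype.card ι := by
    rw [Fintype.card_finset] at hk
    grw [natDegree_twistedJet_nodalPowTwist_le g (hPm I), hk]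
  obtain ⟨I, J, M, N, hIJ, hM, hN, hMd, hNd, hw⟩ := exists_wronskian_eq_zero nodal_ne_zero
    (nodal_univ_mul_derivative_nodal_pow a g) (fun I => pow_ne_zero g nodal_ne_zero) hP hsum hdegree
  rw [Fintype.card_finset] at hMd hNd
  exact hIJ (eq_of_wronskian_mul_nodal_pow_eq_zero p ha hgp hM hN (hMd.trans_lt hmg)
    (hNd.trans_lt hmg) hw)

end NodalPowers

section Stepanov

open Polynomial Lagrange

variable {K : Type*} [Field K]

lemma finrank_degreeLT (n : ℕ) : Module.finrank K (degreeLT K n) = n := by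
  simpa using Module.finrank_eq_card_basis (degreeLT.basis K n)

lemma natDegree_le_sub_one_of_mem_degreeLT {P : K[X]} {n : ℕ} (hP : P ∈ degreeLT K n) :
    P.natDegree ≤ n - 1 := by
  by_cases hP₀ : P = 0
  · simp [hP₀]
  · exact Nat.le_sub_one_of_lt ((natDegree_lt_iff_degree_lt hP₀).mpr (mem_degreeLT.mp hP))

lemma exists_ne_zero_forall_eq_zero_of_mul_lt_finrank {V : Type*} [AddCommGroup V] [Module K V]
    {D n : ℕ} (L : Fin D → V →ₗ[K] K[X]) (hL : ∀ k v, L k v ∈ degreeLT K n)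
    (hV : D * n < Module.finrank K V) : ∃ v ≠ 0, ∀ k, L k v = 0 := by
  have : Module.Finite K V := Module.finite_of_finrank_pos (Nat.zero_lt_of_lt hV)
  let Φ : V →ₗ[K] Fin D → degreeLT K n := LinearMap.pi fun k => (L k).codRestrict _ (hL k)
  have hΦ : LinearMap.ker Φ ≠ ⊥ := LinearMap.ker_ne_bot_of_finrank_lt <| by
    simpa [Module.finrank_pi_fintype, finrank_degreeLT] using hV
  obtain ⟨v, hv, hv₀⟩ := Submodule.exists_mem_ne_zero_of_ne_bot hΦ
  exact ⟨v, hv₀, fun k => congrArg Subtype.val (congrFun hv k)⟩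

lemma card_mul_le_natDegree {Ψ : K[X]} {S : Finset K} {D : ℕ}
    (hS : ∀ x ∈ S, D ≤ Ψ.rootMultiplicity x) : S.card * D ≤ Ψ.natDegree := by
  classical
  have hle : D • S.val ≤ Ψ.roots := Multiset.le_iff_count.mpr fun x => by
    rw [Multiset.count_nsmul, Multiset.count_eq_of_nodup S.nodup, count_roots]
    split_ifs with hx
    · simpa using hS x hx
    · simp
  calc S.card * D = (D • S.val).card := by simp [mul_comm]
    _ ≤ Ψ.roots.card := Multiset.card_le_card hle
    _ ≤ Ψ.natDegree := card_roots' Ψ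

variable {ι : Type*}

lemma eval_nodal_pow_eq {a : ι → K} {x c : K} {g : ℕ} (hx : ∀ i, (x - a i) ^ g = c)
    (I : Finset ι) : (nodal I a ^ g).eval x = c ^ I.card := by
  rw [eval_pow, eval_nodal, ← Finset.prod_pow, Finset.prod_congr rfl fun i _ => hx i,
    Finset.prod_const]

variable [Fintype ι]

lemma exists_ne_zero_forall_sum_smul_twistedJet_eq_zero [DecidableEq ι] (a : ι → K) (g : ℕ)
    (c : K) {D m : ℕ} (hm : D * (m + D * Fintype.card ι) < 2 ^ Fintype.card ι * m) :
    ∃ P : Finset ι → K[X], P ≠ 0 ∧ (∀ I, (P I).natDegree ≤ m) ∧ ∀ k < D,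
      ∑ I, c ^ I.card • twistedJet (nodal Finset.univ a) (nodalPowTwist a g) P k I = 0 := by
  let L (k : Fin D) : (Finset ι → degreeLT K m) →ₗ[K] K[X] :=
    ∑ I, c ^ I.card • (twistedDerivative (nodal Finset.univ a) (nodalPowTwist a g I) ^ (k : ℕ)).comp
      ((degreeLT K m).subtype.comp (LinearMap.proj I))
  have hL (k : Fin D) (P : Finset ι → degreeLT K m) : L k P = ∑ I, c ^ I.card •
      twistedJet (nodal Finset.univ a) (nodalPowTwist a g) (fun I => (P I : K[X])) k I := by
    simp [L, twistedJet]
  have hmpos : 0 < m := Nat.pos_of_ne_zero (by rintro rfl; simp at hm)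
  obtain ⟨P, hP, hLP⟩ := exists_ne_zero_forall_eq_zero_of_mul_lt_finrank L
    (n := m + D * Fintype.card ι) (fun k P => by
      rw [hL]
      refine Submodule.sum_mem _ fun I _ => Submodule.smul_mem _ _ (mem_degreeLT.mpr ?_)
      refine degree_le_natDegree.trans_lt (Nat.cast_lt.mpr ?_)
      have hjet := natDegree_twistedJet_nodalPowTwist_le (a := a) g
        (P := fun I => (P I : K[X])) (natDegree_le_sub_one_of_mem_degreeLT (P I).2) k
      have hk := Nat.mul_le_mul_right (Fintype.card ι) k.2.le
      omega)
    (by simpa [Module.finrank_pi_fintype, finrank_degreeLT] using hm)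
  refine ⟨fun I => P I, fun h => hP (funext fun I => Subtype.ext (congrFun h I)),
    fun I => (natDegree_le_sub_one_of_mem_degreeLT (P I).2).trans (Nat.sub_le m 1), fun k hk => ?_⟩
  rw [← hL ⟨k, hk⟩, hLP]

lemma natDegree_sum_mul_nodal_pow_le (a : ι → K) (g : ℕ) {P : Finset ι → K[X]} {m : ℕ}
    (hP : ∀ I, (P I).natDegree ≤ m) :
    (∑ I, P I * nodal I a ^ g).natDegree ≤ m + g * Fintype.card ι := by
  refine natDegree_sum_le_of_forall_le _ _ fun I _ => natDegree_mul_le.trans ?_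
  refine add_le_add (hP I) (natDegree_pow_le.trans (Nat.mul_le_mul_left g ?_))
  rw [natDegree_nodal]
  exact I.card_le_univ

lemma le_rootMultiplicity_sum_mul_nodal_pow [DecidableEq ι] (p : ℕ) [CharP K p] {a : ι → K}
    {x c : K} {g D : ℕ} (hg : g ≠ 0) (hc : c ≠ 0) (hx : ∀ i, (x - a i) ^ g = c) (hD : D ≤ p)
    {P : Finset ι → K[X]} (hΨ : ∑ I, P I * nodal I a ^ g ≠ 0)
    (hP : ∀ k < D,
      ∑ I, c ^ I.card • twistedJet (nodal Finset.univ a) (nodalPowTwist a g) P k I = 0) :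
    D ≤ (∑ I, P I * nodal I a ^ g).rootMultiplicity x := by
  have hT : (nodal Finset.univ a).eval x ≠ 0 := fun h₀ => pow_ne_zero _ hc <| by
    rw [← eval_nodal_pow_eq hx Finset.univ, eval_pow, h₀, zero_pow hg]
  refine le_rootMultiplicity_of_eval_twistedDerivative_zero_pow_eq_zero p hT hD hΨ fun k hk => ?_
  rw [twistedDerivative_zero_pow_sum _ (nodal_univ_mul_derivative_nodal_pow a g)]
  simpa only [eval_finsetSum, eval_mul, eval_smul, eval_nodal_pow_eq hx, smul_eq_mul, mul_comm,
    eval_zero] using congrArg (eval x) (hP k hk)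

theorem card_mul_two_pow_le_of_forall_sub_pow_eq (p : ℕ) [CharP K p] {a : ι → K}
    (ha : Function.Injective a) {g : ℕ} (hgp : 2 * g ≤ p) (hcard : 2 ≤ Fintype.card ι)
    (hg : 2 * Fintype.card ι * 4 ^ Fintype.card ι ≤ g) {c : K} (hc : c ≠ 0) {S : Finset K}
    (hS : ∀ x ∈ S, ∀ i, (x - a i) ^ g = c) :
    S.card * 2 ^ Fintype.card ι ≤ Fintype.card ι * (2 ^ Fintype.card ι + 4 * g) := by
  classical
  set h := Fintype.card ι with hh
  obtain ⟨D, hD⟩ : 4 ∣ 2 ^ h := pow_dvd_pow 2 hcard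
  have hDpos : 0 < D := Nat.pos_of_ne_zero (by rintro rfl; simp at hD)
  have hgD : 32 * (h * D ^ 2) ≤ g := by
    have : 4 ^ h = (2 ^ h) ^ 2 := by rw [← pow_mul, mul_comm, pow_mul]; norm_num
    rw [this, hD] at hg
    linarith
  have hDg : D ≤ h * D ^ 2 := by nlinarith
  have hhpos : 0 < h * D ^ 2 := by positivity
  obtain ⟨P, hP, hPm, hPD⟩ := exists_ne_zero_forall_sum_smul_twistedJet_eq_zero a g c (D := D)
    (m := h * D) (by rw [← hh, hD]; linarith)
  have hΨ := sum_mul_nodal_pow_ne_zero p ha hgp (by rw [← hh, hD]; linarith) hP hPm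
  have hmult (x : K) (hx : x ∈ S) : D ≤ (∑ I, P I * nodal I a ^ g).rootMultiplicity x :=
    le_rootMultiplicity_sum_mul_nodal_pow p (by omega) hc (hS x hx) (by omega) hΨ hPD
  have hcount := (card_mul_le_natDegree hmult).trans (natDegree_sum_mul_nodal_pow_le a g hPm)
  rw [← hh] at hcount
  rw [hD]
  linarith

end Stepanov

section FareyPairs

open Finset

lemma card_Ioc_filter_modEq_le {a b r : ℕ} (hab : a ≤ b) (hr : 0 < r) (v : ℕ) :
    (#{x ∈ Ioc a b | x ≡ v [MOD r]} : ℚ) ≤ (b - a : ℚ) / r + 1 := by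
  have hcard := Nat.Ioc_filter_modEq_card a b hr v
  rw [max_eq_left (sub_nonneg.mpr (by gcongr))] at hcard
  have hcardQ : (#{x ∈ Ioc a b | x ≡ v [MOD r]} : ℚ) = ⌊(b - v : ℚ) / r⌋ - ⌊(a - v : ℚ) / r⌋ := by
    exact_mod_cast hcard
  have hb := Int.floor_le ((b - v : ℚ) / r)
  have ha := Int.lt_floor_add_one ((a - v : ℚ) / r)
  have hdiff : (b - a : ℚ) / r = (b - v) / r - (a - v) / r := by ring
  linarith

lemma le_card_Ioc_filter_modEq {a b r : ℕ} (hr : 0 < r) (v : ℕ) :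
    (b - a : ℚ) / r - 1 ≤ #{x ∈ Ioc a b | x ≡ v [MOD r]} := by
  have hcard := (le_max_left _ 0).trans_eq (Nat.Ioc_filter_modEq_card a b hr v).symm
  have hcardQ : (⌊(b - v : ℚ) / r⌋ - ⌊(a - v : ℚ) / r⌋ : ℚ) ≤ #{x ∈ Ioc a b | x ≡ v [MOD r]} := by
    exact_mod_cast hcard
  have ha := Int.floor_le ((a - v : ℚ) / r)
  have hb := Int.lt_floor_add_one ((b - v : ℚ) / r)
  have hdiff : (b - a : ℚ) / r = (b - v) / r - (a - v) / r := by ring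
  linarith

lemma modEq_two_mul_self_iff_odd_and_dvd {d : ℕ} (hd : Odd d) {n : ℕ} :
    n ≡ d [MOD 2 * d] ↔ Odd n ∧ d ∣ n := by
  rw [← Nat.modEq_and_modEq_iff_modEq_mul (Nat.coprime_two_left.mpr hd)]
  refine and_congr ?_ ?_
  · rw [Nat.ModEq, Nat.odd_iff.mp hd, Nat.odd_iff]
  · rw [Nat.ModEq, Nat.mod_self, Nat.dvd_iff_mod_eq_zero]

lemma card_Ioc_filter_odd_and_dvd_le {d : ℕ} (hd : Odd d) (Y : ℕ) :
    (#{q ∈ Ioc Y (2 * Y) | Odd q ∧ d ∣ q} : ℚ) ≤ Y / (2 * d) + 1 := by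
  simp only [← modEq_two_mul_self_iff_odd_and_dvd hd]
  refine (card_Ioc_filter_modEq_le (by omega) (mul_pos two_pos hd.pos) d).trans_eq ?_
  push_cast
  ring

/-- The odd denominators prime to the prime `u`, in the dyadic range `(Y, 2Y]`, of the Farey-type
fractions `t / q` around which the starting points of the argument are chosen. -/
def fareyDenominators (u Y : ℕ) : Finset ℕ :=
  {q ∈ Ioc Y (2 * Y) | Odd q ∧ ¬u ∣ q}

/-- The pairs `(q, t)` of a denominator `q` and a coprime numerator `t ≤ Y`. -/
def fareyPairs (u Y : ℕ) : Finset (ℕ × ℕ) :=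
  {x ∈ fareyDenominators u Y ×ˢ Ioc 0 Y | x.1.Coprime x.2}

lemma le_card_fareyDenominators {u : ℕ} (hu : u.Prime) (Y : ℕ) :
    (Y : ℚ) / 3 - 2 ≤ #(fareyDenominators u Y) := by
  have hmultiples : (#{q ∈ Ioc Y (2 * Y) | Odd q ∧ u ∣ q} : ℚ) ≤ Y / 6 + 1 := by
    obtain rfl | huodd := hu.eq_two_or_odd'
    · rw [filter_eq_empty_iff.mpr fun q _ hq => Nat.not_even_iff_odd.mpr hq.1
        (even_iff_two_dvd.mpr hq.2), card_empty]
      positivity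
    · have hu₃ : (3 : ℚ) ≤ u := by
        exact_mod_cast hu.two_le.lt_of_ne' (huodd.ne_two_of_dvd_nat dvd_rfl)
      grw [card_Ioc_filter_odd_and_dvd_le huodd, ← hu₃]
      norm_num
  have hodd : (Y : ℚ) / 2 - 1 ≤ #{q ∈ Ioc Y (2 * Y) | Odd q} := by
    have := le_card_Ioc_filter_modEq (a := Y) (b := 2 * Y) two_pos 1
    simp only [Nat.ModEq, Nat.mod_eq_of_lt one_lt_two, ← Nat.odd_iff] at this
    push_cast at this
    linarith
  have hsplit : (#{q ∈ Ioc Y (2 * Y) | Odd q} : ℚ) =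
      #{q ∈ Ioc Y (2 * Y) | Odd q ∧ u ∣ q} + #(fareyDenominators u Y) := by
    rw [fareyDenominators, ← filter_filter, ← filter_filter]
    exact_mod_cast (card_filter_add_card_filter_not _).symm
  linarith

lemma sum_one_div_odd_sq_le (n : ℕ) :
    ∑ k ∈ range n, (1 : ℚ) / (2 * k + 3) ^ 2 ≤ 1 / 4 - 1 / (4 * ((n : ℚ) + 1)) := by
  induction n with
  | zero => norm_num
  | succ n ih =>
    have hterm : (1 : ℚ) / (2 * n + 3) ^ 2 ≤ 1 / (4 * (n + 1)) - 1 / (4 * (n + 2)) := by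
      rw [div_sub_div _ _ (by positivity) (by positivity), div_le_div_iff₀ (by positivity)
        (by positivity)]
      nlinarith
    rw [sum_range_succ]
    push_cast
    rw [add_assoc (n : ℚ), one_add_one_eq_two]
    linarith

lemma product_subset_fareyPairs_union (u Y : ℕ) :
    fareyDenominators u Y ×ˢ Ioc 0 Y ⊆ fareyPairs u Y ∪ (range Y).biUnion fun k =>
      {q ∈ Ioc Y (2 * Y) | Odd q ∧ 2 * k + 3 ∣ q} ×ˢ {t ∈ Ioc 0 Y | 2 * k + 3 ∣ t} := by
  rintro ⟨q, t⟩ hqt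
  obtain ⟨hq, ht⟩ := mem_product.mp hqt
  by_cases hcop : q.Coprime t
  · exact mem_union_left _ (mem_filter.mpr ⟨hqt, hcop⟩)
  obtain ⟨hqY, hqodd, -⟩ := mem_filter.mp hq
  obtain ⟨k, hk⟩ : Odd (q.gcd t) := hqodd.of_dvd_nat (Nat.gcd_dvd_left q t)
  have hgcd : q.gcd t ≤ Y := (Nat.gcd_le_right q (mem_Ioc.mp ht).1).trans (mem_Ioc.mp ht).2
  have hne : q.gcd t ≠ 1 := hcop
  have hd : 2 * (k - 1) + 3 = q.gcd t := by omega
  refine mem_union_right _ (mem_biUnion.mpr ⟨k - 1, mem_range.mpr (by omega), ?_⟩)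
  simp only [hd, mem_product, mem_filter]
  exact ⟨⟨hqY, hqodd, Nat.gcd_dvd_left q t⟩, ht, Nat.gcd_dvd_right q t⟩

lemma card_product_filter_dvd_le {d : ℕ} (hd : Odd d) (Y : ℕ) :
    (#({q ∈ Ioc Y (2 * Y) | Odd q ∧ d ∣ q} ×ˢ {t ∈ Ioc 0 Y | d ∣ t}) : ℚ) ≤
      3 / 5 * Y ^ 2 * (1 / d ^ 2) + 5 / 2 := by
  have hq := card_Ioc_filter_odd_and_dvd_le hd Y
  have ht : (#{t ∈ Ioc 0 Y | d ∣ t} : ℚ) ≤ Y / d := by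
    rw [Nat.Ioc_filter_dvd_card_eq_div]
    exact Nat.cast_div_le
  rw [card_product, Nat.cast_mul]
  calc _ ≤ (Y / (2 * d) + 1 : ℚ) * (Y / d) := by gcongr
    _ = (Y / d : ℚ) ^ 2 / 2 + Y / d := by ring
    _ ≤ 3 / 5 * (Y / d : ℚ) ^ 2 + 5 / 2 := by nlinarith [sq_nonneg (Y / d - 5 : ℚ)]
    _ = _ := by ring

lemma sq_le_eight_mul_card_fareyPairs {u Y : ℕ} (hu : u.Prime) (hY : 100 ≤ Y) :
    Y ^ 2 ≤ 8 * #(fareyPairs u Y) := by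
  have hYQ : (100 : ℚ) ≤ Y := by exact_mod_cast hY
  have hcover : (#(fareyDenominators u Y) * Y : ℚ) ≤
      #(fareyPairs u Y) + ∑ k ∈ range Y, (3 / 5 * (Y : ℚ) ^ 2 * (1 / (2 * k + 3) ^ 2) + 5 / 2) := by
    have hcard := (card_le_card (product_subset_fareyPairs_union u Y)).trans
      ((card_union_le _ _).trans (Nat.add_le_add_left card_biUnion_le _))
    rw [card_product, Nat.card_Ioc, Nat.sub_zero] at hcard
    refine (Nat.cast_le (α := ℚ).mpr hcard |>.trans' (by push_cast; rfl)).trans ?_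
    push_cast
    gcongr with k
    exact_mod_cast card_product_filter_dvd_le (d := 2 * k + 3) ⟨k + 1, by ring⟩ Y
  have hsum : ∑ k ∈ range Y, (1 : ℚ) / (2 * k + 3) ^ 2 ≤ 1 / 4 :=
    (sum_one_div_odd_sq_le Y).trans (sub_le_self _ (by positivity))
  rw [sum_add_distrib, ← mul_sum, sum_const, card_range, nsmul_eq_mul] at hcover
  have hdenominators := le_card_fareyDenominators hu Y
  have : (Y : ℚ) ^ 2 ≤ 8 * #(fareyPairs u Y) := by nlinarith
  exact_mod_cast this

end FareyPairs

section StartingPoints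

open Finset

/-- The step of the progressions of length `h` attached to the exceptional prime `u`: a step `u`
keeps a progression in one class modulo `u`, but only a small `u` can be afforded. -/
def stride (u h : ℕ) : ℕ :=
  if u ≤ 2 * h then u else 1

lemma stride_pos {u : ℕ} (hu : 0 < u) (h : ℕ) : 0 < stride u h := by
  unfold stride
  split_ifs <;> omega

lemma stride_le {h : ℕ} (hh : 0 < h) (u : ℕ) : stride u h ≤ 2 * h := by
  unfold stride
  split_ifs <;> omega

/-- The integers `z` just above `t * p / q`, where `x = (q, t)`, for which none of the numbers
`q * (z + stride u h * i) - t * p` with `i < h` is divisible by `u`. -/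
def startingPoints (p u h : ℕ) (x : ℕ × ℕ) : Finset ℕ :=
  {z ∈ Ioc (x.2 * p / x.1) (x.2 * p / x.1 + 2 * (stride u h * h)) |
    ∀ i < h, ¬x.2 * p ≡ x.1 * (z + stride u h * i) [MOD u]}

lemma card_Ioc_add_mul_filter_modEq {r : ℕ} (hr : 0 < r) (a k v : ℕ) :
    #{x ∈ Ioc a (a + r * k) | x ≡ v [MOD r]} = k := by
  have hcard := Nat.Ioc_filter_modEq_card a (a + r * k) hr v
  have hrQ : (r : ℚ) ≠ 0 := by positivity
  have hshift : (((a + r * k : ℕ) : ℚ) - v) / r = (a - v) / r + k := by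
    push_cast
    field_simp
    ring
  rw [hshift, Int.floor_add_natCast, add_sub_cancel_left, max_eq_left k.cast_nonneg] at hcard
  exact_mod_cast hcard

lemma card_filter_modEq_mul_add_le {u q : ℕ} (hu : u.Prime) (hq : ¬u ∣ q) (a k b c : ℕ) :
    #{z ∈ Ioc a (a + u * k) | b ≡ q * (z + c) [MOD u]} ≤ k := by
  obtain hempty | ⟨v, hv⟩ := eq_empty_or_nonempty {z ∈ Ioc a (a + u * k) | b ≡ q * (z + c) [MOD u]}
  · simp [hempty]
  refine (card_le_card fun z hz => ?_).trans_eq (card_Ioc_add_mul_filter_modEq hu.pos a k v)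
  obtain ⟨hzIoc, hzb⟩ := mem_filter.mp hz
  refine mem_filter.mpr ⟨hzIoc, Nat.ModEq.add_right_cancel' c ?_⟩
  exact Nat.ModEq.cancel_left_of_coprime ((hu.coprime_iff_not_dvd).mpr hq)
    (hzb.symm.trans (mem_filter.mp hv).2)

lemma card_filter_exists_modEq_le {u q : ℕ} (hu : u.Prime) (hq : ¬u ∣ q) (a b h : ℕ) :
    #{z ∈ Ioc a (a + 2 * (stride u h * h)) | ∃ i < h, b ≡ q * (z + stride u h * i) [MOD u]} ≤
      stride u h * h := by
  unfold stride
  split_ifs with hsmall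
  · calc _ ≤ #{z ∈ Ioc a (a + u * (2 * h)) | b ≡ q * (z + 0) [MOD u]} := by
          rw [mul_left_comm]
          refine card_le_card (monotone_filter_right _ ?_)
          rintro z - ⟨i, -, hi⟩
          simpa [Nat.ModEq, mul_add, mul_left_comm q u] using hi
      _ ≤ 2 * h := card_filter_modEq_mul_add_le hu hq a (2 * h) b 0
      _ ≤ u * h := Nat.mul_le_mul_right h hu.two_le
  · calc _ ≤ #((range h).biUnion fun i => {z ∈ Ioc a (a + u * 1) | b ≡ q * (z + i) [MOD u]}) := by
          refine card_le_card fun z hz => ?_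
          obtain ⟨hzIoc, i, hi, hib⟩ := mem_filter.mp hz
          rw [one_mul] at hib
          exact mem_biUnion.mpr ⟨i, mem_range.mpr hi, mem_filter.mpr
            ⟨Ioc_subset_Ioc_right (by omega) hzIoc, hib⟩⟩
      _ ≤ ∑ i ∈ range h, 1 := card_biUnion_le.trans
          (sum_le_sum fun i _ => card_filter_modEq_mul_add_le hu hq a 1 b i)
      _ = 1 * h := by rw [sum_const, card_range, smul_eq_mul, mul_comm]

lemma le_card_startingPoints {u : ℕ} (hu : u.Prime) {x : ℕ × ℕ} (hx : ¬u ∣ x.1) (p h : ℕ) :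
    stride u h * h ≤ #(startingPoints p u h x) := by
  set a := x.2 * p / x.1 with ha
  have hsplit := card_filter_add_card_filter_not (s := Ioc a (a + 2 * (stride u h * h)))
    fun z => ∃ i < h, x.2 * p ≡ x.1 * (z + stride u h * i) [MOD u]
  have hbad := card_filter_exists_modEq_le hu hx a (x.2 * p) h
  have hgood : startingPoints p u h x = {z ∈ Ioc a (a + 2 * (stride u h * h)) |
      ¬∃ i < h, x.2 * p ≡ x.1 * (z + stride u h * i) [MOD u]} := by
    simp only [startingPoints, ← ha, not_exists, not_and]
  rw [Nat.card_Ioc] at hsplit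
  rw [hgood]
  omega

lemma mul_lt_mul_of_mem_startingPoints {p u h z : ℕ} {x : ℕ × ℕ} (hx : 0 < x.1)
    (hz : z ∈ startingPoints p u h x) : x.2 * p < x.1 * z := by
  rw [mul_comm x.1]
  exact (Nat.div_lt_iff_lt_mul hx).mp (mem_Ioc.mp (mem_filter.mp hz).1).1

lemma mul_add_le_of_mem_startingPoints {p u h z H : ℕ} {x : ℕ × ℕ}
    (hH : x.1 * (3 * (stride u h * h)) ≤ H) (hz : z ∈ startingPoints p u h x) :
    x.1 * (z + stride u h * h) ≤ x.2 * p + H := by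
  have hzle := (mem_Ioc.mp (mem_filter.mp hz).1).2
  calc x.1 * (z + stride u h * h)
      ≤ x.1 * (x.2 * p / x.1) + x.1 * (3 * (stride u h * h)) := by
        rw [← mul_add]
        exact Nat.mul_le_mul_left _ (by omega)
    _ ≤ x.2 * p + H := add_le_add (Nat.mul_div_le _ _) hH

lemma eq_of_mul_lt_mul_le_add {p H q t q' t' z : ℕ} (hqt : q.Coprime t) (hqt' : q'.Coprime t')
    (hq : H * q < p) (hq' : H * q' < p) (hlt : t * p < q * z) (hle : q * z ≤ t * p + H)
    (hlt' : t' * p < q' * z) (hle' : q' * z ≤ t' * p + H) : (q, t) = (q', t') := by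
  -- Both products are the quotient of `q * q' * z` by `p`.
  have hcross : t * q' = t' * q := by
    refine le_antisymm (Nat.lt_succ_iff.mp ?_) (Nat.lt_succ_iff.mp ?_) <;>
      refine lt_of_mul_lt_mul_right ?_ (Nat.zero_le p) <;> nlinarith
  have hqq' : q = q' := Nat.dvd_antisymm
    (hqt.dvd_of_dvd_mul_left (hcross ▸ dvd_mul_left q t'))
    (hqt'.dvd_of_dvd_mul_left (hcross ▸ dvd_mul_left q' t))
  subst hqq'
  have hqpos : 0 < q := Nat.pos_of_ne_zero (by rintro rfl; simp at hlt)
  rw [Nat.eq_of_mul_eq_mul_right hqpos hcross]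

lemma mem_fareyPairs {u Y : ℕ} {x : ℕ × ℕ} : x ∈ fareyPairs u Y ↔
    ((x.1 ∈ Ioc Y (2 * Y) ∧ Odd x.1 ∧ ¬u ∣ x.1) ∧ x.2 ∈ Ioc 0 Y) ∧ x.1.Coprime x.2 := by
  simp only [fareyPairs, fareyDenominators, mem_filter, mem_product]

lemma lt_of_mem_startingPoints {p u h z H : ℕ} {x : ℕ × ℕ} (hx : x.2 < x.1) (hHp : H < p)
    (hH : x.1 * (3 * (stride u h * h)) ≤ H) (hz : z ∈ startingPoints p u h x) : z < p := by
  refine lt_of_mul_lt_mul_left (a := x.1) ?_ (Nat.zero_le _)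
  calc x.1 * z ≤ x.1 * (z + stride u h * h) := Nat.mul_le_mul_left _ (Nat.le_add_right _ _)
    _ ≤ x.2 * p + H := mul_add_le_of_mem_startingPoints hH hz
    _ < (x.2 + 1) * p := by linarith
    _ ≤ x.1 * p := Nat.mul_le_mul_right p hx

variable {p u h H Y : ℕ} [Fact p.Prime]

lemma pow_eq_of_mem_startingPoints {g z : ℕ} {x : ℕ × ℕ}
    (hpow : ∀ n : ℕ, 0 < n → n ≤ H → ¬u ∣ n → (n : ZMod p) ^ g = 1)
    (hs : (stride u h : ZMod p) ≠ 0) (hYH : 2 * Y * (3 * (stride u h * h)) ≤ H)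
    (hx : x ∈ fareyPairs u Y) (hz : z ∈ startingPoints p u h x) {i : ℕ} (hi : i < h) :
    ((z : ZMod p) / stride u h + i) ^ g = ((stride u h : ZMod p)⁻¹) ^ g := by
  obtain ⟨⟨⟨hq, -, hqu⟩, -⟩, -⟩ := mem_fareyPairs.mp hx
  have hqpos : 0 < x.1 := (Nat.zero_le Y).trans_lt (mem_Ioc.mp hq).1
  have hqH : x.1 * (3 * (stride u h * h)) ≤ H :=
    (Nat.mul_le_mul_right _ (mem_Ioc.mp hq).2).trans hYH
  have hshpos : 0 < 3 * (stride u h * h) :=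
    mul_pos three_pos (mul_pos (Nat.pos_of_ne_zero fun h₀ => hs (by simp [h₀])) (pos_of_gt hi))
  set n := x.1 * (z + stride u h * i) - x.2 * p with hn
  have hlt : x.2 * p < x.1 * (z + stride u h * i) :=
    (mul_lt_mul_of_mem_startingPoints hqpos hz).trans_le
      (Nat.mul_le_mul_left _ (Nat.le_add_right _ _))
  have hnH : n ≤ H := by
    have hle := mul_add_le_of_mem_startingPoints hqH hz
    have : x.1 * (z + stride u h * i) ≤ x.1 * (z + stride u h * h) := by gcongr
    omega
  have hnu : ¬u ∣ n := fun hdvd =>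
    (mem_filter.mp hz).2 i hi ((Nat.modEq_iff_dvd' hlt.le).mpr hdvd)
  have hncast : (n : ZMod p) = x.1 * (stride u h * (z / stride u h + i)) := by
    rw [hn, Nat.cast_sub hlt.le]
    push_cast
    rw [ZMod.natCast_self, mul_zero, sub_zero, mul_add (stride u h : ZMod p), mul_div_cancel₀ _ hs]
  have hnpow := hpow n (Nat.sub_pos_of_lt hlt) hnH hnu
  have hqpow := hpow x.1 hqpos ((Nat.le_mul_of_pos_right _ hshpos).trans hqH) hqu
  rw [hncast, mul_pow, hqpow, one_mul, mul_pow] at hnpow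
  rw [inv_pow]
  exact eq_inv_of_mul_eq_one_right hnpow

lemma stride_mul_card_fareyPairs_le {S : Finset (ZMod p)} (hu : u.Prime)
    (hs : (stride u h : ZMod p) ≠ 0) (hYH : 2 * Y * (3 * (stride u h * h)) ≤ H)
    (hHY : H * (2 * Y) < p) (hHp : H < p)
    (hS : ∀ x ∈ fareyPairs u Y, ∀ z ∈ startingPoints p u h x, (z / stride u h : ZMod p) ∈ S) :
    stride u h * h * #(fareyPairs u Y) ≤ #S := by
  have hbounds : ∀ x ∈ fareyPairs u Y, x.2 < x.1 ∧ H * x.1 < p ∧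
      x.1 * (3 * (stride u h * h)) ≤ H := fun x hx => by
    obtain ⟨⟨⟨hq, -, -⟩, ht⟩, -⟩ := mem_fareyPairs.mp hx
    rw [mem_Ioc] at hq ht
    exact ⟨by omega, (Nat.mul_le_mul_left H hq.2).trans_lt hHY,
      (Nat.mul_le_mul_right _ hq.2).trans hYH⟩
  calc stride u h * h * #(fareyPairs u Y)
      = ∑ _ ∈ fareyPairs u Y, stride u h * h := by rw [sum_const, smul_eq_mul, mul_comm]
    _ ≤ ∑ x ∈ fareyPairs u Y, #(startingPoints p u h x) := sum_le_sum fun x hx =>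
        le_card_startingPoints hu (mem_fareyPairs.mp hx).1.1.2.2 p h
    _ = #((fareyPairs u Y).sigma fun x => startingPoints p u h x) := (card_sigma _ _).symm
    _ ≤ #S := card_le_card_of_injOn (fun y => (y.2 / stride u h : ZMod p)) ?_ ?_
  · rintro ⟨x, z⟩ hy
    obtain ⟨hx, hz⟩ := mem_sigma.mp hy
    exact hS x hx z hz
  · rintro ⟨x, z⟩ hy ⟨x', z'⟩ hy' heq
    obtain ⟨hx, hz⟩ := mem_sigma.mp hy
    obtain ⟨hx', hz'⟩ := mem_sigma.mp hy'
    obtain ⟨hlt, hHx, hxH⟩ := hbounds x hx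
    obtain ⟨hlt', hHx', hxH'⟩ := hbounds x' hx'
    obtain rfl : z = z' := by
      have := (ZMod.natCast_eq_natCast_iff' z z' p).mp ((div_left_inj' hs).mp heq)
      rwa [Nat.mod_eq_of_lt (lt_of_mem_startingPoints hlt hHp hxH hz),
        Nat.mod_eq_of_lt (lt_of_mem_startingPoints hlt' hHp hxH' hz')] at this
    obtain rfl : x = x' := eq_of_mul_lt_mul_le_add (mem_fareyPairs.mp hx).2
      (mem_fareyPairs.mp hx').2 hHx hHx'
      (mul_lt_mul_of_mem_startingPoints (pos_of_gt hlt) hz)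
      ((Nat.mul_le_mul_left _ (Nat.le_add_right _ _)).trans
        (mul_add_le_of_mem_startingPoints hxH hz))
      (mul_lt_mul_of_mem_startingPoints (pos_of_gt hlt') hz')
      ((Nat.mul_le_mul_left _ (Nat.le_add_right _ _)).trans
        (mul_add_le_of_mem_startingPoints hxH' hz'))
    rfl

theorem stride_mul_sq_mul_two_pow_le {g : ℕ} (hu : u.Prime)
    (hpow : ∀ n : ℕ, 0 < n → n ≤ H → ¬u ∣ n → (n : ZMod p) ^ g = 1) (hh : 2 ≤ h)
    (hg : 2 * h * 4 ^ h ≤ g) (hgp : 2 * g < p) (hY : 100 ≤ Y)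
    (hYH : 2 * Y * (3 * (stride u h * h)) ≤ H) (hHY : H * (2 * Y) < p) (hHp : H < p) :
    stride u h * Y ^ 2 * 2 ^ h ≤ 8 * (2 ^ h + 4 * g) := by
  classical
  have hhp : 2 * h < p := by nlinarith [Nat.one_le_pow h 4 (by norm_num)]
  have hs : (stride u h : ZMod p) ≠ 0 := fun h₀ => by
    have := Nat.le_of_dvd (stride_pos hu.pos h) ((ZMod.natCast_eq_zero_iff _ _).mp h₀)
    have := stride_le (by omega : 0 < h) u
    omega
  set S : Finset (ZMod p) :=
    {x | ∀ i : Fin h, (x - -(i : ZMod p)) ^ g = ((stride u h : ZMod p)⁻¹) ^ g} with hSdef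
  have hlower : stride u h * h * #(fareyPairs u Y) ≤ #S :=
    stride_mul_card_fareyPairs_le hu hs hYH hHY hHp fun x hx z hz => by
      simp only [hSdef, sub_neg_eq_add, mem_filter_univ]
      exact fun i => pow_eq_of_mem_startingPoints hpow hs hYH hx hz i.2
  have hinj : Function.Injective fun i : Fin h => -((i : ℕ) : ZMod p) := fun i j hij => by
    have := (ZMod.natCast_eq_natCast_iff' i j p).mp (neg_injective hij)
    rw [Nat.mod_eq_of_lt (by omega), Nat.mod_eq_of_lt (by omega)] at this
    exact Fin.ext this
  have hupper := card_mul_two_pow_le_of_forall_sub_pow_eq p hinj hgp.le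
    (by simpa using hh) (by simpa using hg) (pow_ne_zero g (inv_ne_zero hs))
    (S := S) fun x hx => (mem_filter.mp hx).2
  rw [Fintype.card_fin] at hupper
  have hpairs := sq_le_eight_mul_card_fareyPairs hu hY
  refine Nat.le_of_mul_le_mul_left (c := h) ?_ (by omega)
  calc h * (stride u h * Y ^ 2 * 2 ^ h)
      ≤ h * (stride u h * (8 * #(fareyPairs u Y)) * 2 ^ h) := by gcongr
    _ = 8 * (stride u h * h * #(fareyPairs u Y) * 2 ^ h) := by ring
    _ ≤ 8 * (#S * 2 ^ h) := by gcongr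
    _ ≤ 8 * (h * (2 ^ h + 4 * g)) := by gcongr
    _ = h * (8 * (2 ^ h + 4 * g)) := by ring

end StartingPoints

section MultiplicativeCharacters

open Finset

lemma map_natCast_eq_one_of_forall_prime {R M F : Type*} [Semiring R] [MonoidWithZero M]
    [FunLike F R M] [MonoidHomClass F R M] (χ : F) {n : ℕ} (hn : n ≠ 0)
    (hχ : ∀ q : ℕ, q.Prime → q ∣ n → χ (q : R) = 1) : χ (n : R) = 1 := by
  rw [← Nat.prod_primeFactorsList hn, Nat.cast_list_prod, map_list_prod]
  refine List.prod_eq_one fun y hy => ?_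
  simp only [List.map_map, List.mem_map, Function.comp_apply] at hy
  obtain ⟨q, hq, rfl⟩ := hy
  exact hχ q (Nat.prime_of_mem_primeFactorsList hq) (Nat.dvd_of_mem_primeFactorsList hq)

lemma exists_two_mul_lt_card_and_pow_eq_one {K R : Type*} [Field K] [Fintype K]
    [CommMonoidWithZero R] [Nontrivial R] {χ : MulChar K R} (hχ : χ ≠ 1) :
    ∃ g, 0 < g ∧ 2 * g < Fintype.card K ∧ ∀ y, χ y = 1 → y ^ g = 1 := by
  classical
  set G := χ.toUnitHom.ker with hG
  refine ⟨Nat.card G, Nat.card_pos, ?_, fun y hy => ?_⟩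
  · have hindex : G.index ≠ 1 := fun h => hχ <| by
      ext y
      have hy : y ∈ G := Subgroup.index_eq_one.mp h ▸ Subgroup.mem_top y
      rw [← MulChar.coe_toUnitHom, (MonoidHom.mem_ker).mp hy, MulChar.one_apply_coe, Units.val_one]
    have hcard := G.card_mul_index
    rw [Nat.card_units, Nat.card_eq_fintype_card (α := K)] at hcard
    have : 2 ≤ G.index := by have := G.index_ne_zero_of_finite; omega
    have := Nat.mul_le_mul_left (Nat.card G) this
    have := Fintype.one_lt_card (α := K)
    omega
  · have hy₀ : y ≠ 0 := by
      rintro rfl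
      exact zero_ne_one ((χ.map_zero).symm.trans hy)
    have hmem : Units.mk0 y hy₀ ∈ G := by
      rw [hG, MonoidHom.mem_ker, Units.ext_iff, MulChar.coe_toUnitHom]
      simpa using hy
    have hpow : Units.mk0 y hy₀ ^ Nat.card G = 1 :=
      congrArg Subtype.val (pow_card_eq_one' (x := (⟨_, hmem⟩ : G)))
    simpa [Units.ext_iff] using hpow

lemma sub_div_le_of_forall_pow_eq_one {p g H u : ℕ} [Fact p.Prime] (hg : 0 < g) (hHp : H < p)
    (hpow : ∀ n : ℕ, 0 < n → n ≤ H → ¬u ∣ n → (n : ZMod p) ^ g = 1) : H - H / u ≤ g := by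
  classical
  have hsplit := card_filter_add_card_filter_not (s := Ioc 0 H) (u ∣ ·)
  rw [Nat.Ioc_filter_dvd_card_eq_div, Nat.card_Ioc] at hsplit
  calc H - H / u = #{n ∈ Ioc 0 H | ¬u ∣ n} := by omega
    _ ≤ #(Polynomial.nthRoots g (1 : ZMod p)).toFinset :=
        card_le_card_of_injOn (fun n => (n : ZMod p)) ?_ ?_
    _ ≤ (Polynomial.nthRoots g (1 : ZMod p)).card := Multiset.toFinset_card_le _
    _ ≤ g := Polynomial.card_nthRoots g 1
  · intro n hn
    obtain ⟨hnH, hnu⟩ := mem_filter.mp hn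
    rw [mem_Ioc] at hnH
    simpa [Polynomial.mem_nthRoots hg] using hpow n hnH.1 hnH.2 hnu
  · intro m hm n hn hmn
    have hmH := (mem_Ioc.mp (mem_filter.mp hm).1).2
    have hnH := (mem_Ioc.mp (mem_filter.mp hn).1).2
    have := (ZMod.natCast_eq_natCast_iff' m n p).mp hmn
    rwa [Nat.mod_eq_of_lt (hmH.trans_lt hHp), Nat.mod_eq_of_lt (hnH.trans_lt hHp)] at this

lemma exists_two_mul_mul_four_pow_le_and_lt {g : ℕ} (hg : 64 ≤ g) :
    ∃ h, 2 ≤ h ∧ 2 * h * 4 ^ h ≤ g ∧ g < 2 * (h + 1) * 4 ^ (h + 1) := by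
  have hlt : ∃ h, g < 2 * (h + 1) * 4 ^ (h + 1) :=
    ⟨g, by nlinarith [Nat.one_le_pow (g + 1) 4 (by norm_num)]⟩
  have hnot {k : ℕ} (hk : k < Nat.find hlt) : 2 * (k + 1) * 4 ^ (k + 1) ≤ g :=
    not_lt.mp (Nat.find_min hlt hk)
  have htwo : 2 ≤ Nat.find hlt := by
    by_contra! hsmall
    have := Nat.find_spec hlt
    interval_cases Nat.find hlt <;> omega
  obtain ⟨k, hk⟩ := Nat.exists_eq_add_of_le' (by omega : 1 ≤ Nat.find hlt)
  exact ⟨Nat.find hlt, htwo, hk ▸ hnot (by omega), Nat.find_spec hlt⟩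

end MultiplicativeCharacters

section Estimates

open Real

lemma forty_three_le_log {x : ℝ} (hx : 10 ^ 19 ≤ x) : 43 ≤ log x := by
  have hlog : log (2 ^ 63) ≤ log x := log_le_log (by positivity) (le_trans (by norm_num) hx)
  rw [log_pow] at hlog
  norm_num at hlog
  linarith [log_two_gt_d9]

lemma rpow_one_fourth_pow_four {x : ℝ} (hx : 0 ≤ x) : (x ^ (1 / 4 : ℝ)) ^ 4 = x := by
  rw [← rpow_natCast, ← rpow_mul hx]
  norm_num

lemma le_rpow_one_fourth {x : ℝ} (hx : 10 ^ 19 ≤ x) : 56169 ≤ x ^ (1 / 4 : ℝ) := by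
  have hx₀ : 0 ≤ x := le_trans (by norm_num) hx
  refine le_of_pow_le_pow_left₀ four_ne_zero (by positivity) ?_
  rw [rpow_one_fourth_pow_four hx₀]
  exact le_trans (by norm_num) hx

lemma log_le_rpow_one_eighth {x : ℝ} (hx : 10 ^ 19 ≤ x) : log x ≤ 0.28 * x ^ (1 / 8 : ℝ) := by
  have hx₀ : 0 < x := lt_of_lt_of_le (by norm_num) hx
  set w := x ^ (1 / 8 : ℝ) with hw
  have hw₀ : 0 < w := rpow_pos_of_pos hx₀ _
  have hwx : w ^ 8 = x := by
    rw [hw, ← rpow_natCast, ← rpow_mul hx₀.le]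
    norm_num
  have hw₂₃₇ : 237 ≤ w := by
    refine le_of_pow_le_pow_left₀ (n := 8) (by norm_num) hw₀.le ?_
    rw [hwx]
    exact le_trans (by norm_num) hx
  -- The tangent line to `log` at `2 ^ 8`.
  have htangent := log_le_sub_one_of_pos (show 0 < w / 2 ^ 8 by positivity)
  rw [log_div hw₀.ne' (by norm_num), log_pow] at htangent
  rw [← hwx, log_pow]
  push_cast at htangent ⊢
  linarith [log_two_lt_d9]

lemma log_sq_le_rpow_one_fourth {x : ℝ} (hx : 10 ^ 19 ≤ x) :
    log x ^ 2 ≤ 0.28 ^ 2 * x ^ (1 / 4 : ℝ) := by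
  have hx₁ : 1 ≤ x := le_trans (by norm_num) hx
  calc log x ^ 2 ≤ (0.28 * x ^ (1 / 8 : ℝ)) ^ 2 :=
        pow_le_pow_left₀ (log_nonneg hx₁) (log_le_rpow_one_eighth hx) 2
    _ = 0.28 ^ 2 * x ^ (1 / 4 : ℝ) := by
        rw [mul_pow, ← rpow_mul_natCast (by linarith)]
        norm_num

lemma sq_rpow_one_fourth_mul_log_sq_lt {x : ℝ} (hx : 10 ^ 19 ≤ x) :
    150 * (x ^ (1 / 4 : ℝ) * log x ^ 2) ^ 2 < x := by
  have hx₀ : 0 < x := lt_of_lt_of_le (by norm_num) hx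
  set v := x ^ (1 / 4 : ℝ)
  calc 150 * (v * log x ^ 2) ^ 2 ≤ 150 * (v * (0.28 ^ 2 * v)) ^ 2 := by
        gcongr
        exact log_sq_le_rpow_one_fourth hx
    _ = 150 * 0.28 ^ 4 * v ^ 4 := by ring
    _ < 1 * v ^ 4 := by gcongr; norm_num
    _ = x := by rw [one_mul, rpow_one_fourth_pow_four hx₀.le]

lemma thirty_mul_rpow_one_fourth_mul_log_sq_lt {x : ℝ} (hx : 10 ^ 19 ≤ x) :
    30 * (x ^ (1 / 4 : ℝ) * log x ^ 2) < x := by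
  have hX : 1 ≤ x ^ (1 / 4 : ℝ) * log x ^ 2 := one_le_mul_of_one_le_of_one_le
    (by linarith [le_rpow_one_fourth hx]) (one_le_pow₀ (by linarith [forty_three_le_log hx]))
  nlinarith [sq_rpow_one_fourth_mul_log_sq_lt hx]

lemma natCast_le_mul_log {h : ℕ} {x : ℝ} (hx : 4 ^ h ≤ x) : h ≤ 0.7215 * log x := by
  have hlog : log ((2 : ℝ) ^ (2 * h)) ≤ log x := log_le_log (by positivity) (by
    rwa [pow_mul, show (2 : ℝ) ^ 2 = 4 by norm_num])
  rw [log_pow] at hlog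
  push_cast at hlog
  nlinarith [log_two_gt_d9, h.cast_nonneg (α := ℝ)]

lemma mul_le_of_le_two_mul {s h L : ℝ} (hh : 0 ≤ h) (hs : s ≤ 2 * h) (hhL : h ≤ 0.7215 * L) :
    s * h ≤ 1.05 * L ^ 2 := by
  calc s * h ≤ 2 * h * h := by gcongr
    _ = 2 * h ^ 2 := by ring
    _ ≤ 2 * (0.7215 * L) ^ 2 := by gcongr
    _ ≤ 1.05 * L ^ 2 := by linarith [sq_nonneg L]

lemma mul_sq_le_of_le_two_mul {s h L : ℝ} (hh : 0 ≤ h) (hs : s ≤ 2 * h) (hhL : h ≤ 0.7215 * L) :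
    s * h ^ 2 ≤ 0.7514 * L ^ 3 := by
  have hL : 0 ≤ L := by linarith
  calc s * h ^ 2 ≤ 2 * h * h ^ 2 := by gcongr
    _ = 2 * h ^ 3 := by ring
    _ ≤ 2 * (0.7215 * L) ^ 3 := by gcongr
    _ ≤ 0.7514 * L ^ 3 := by linarith [pow_nonneg hL 3]

lemma exists_mul_mul_le_floor {k p : ℕ} {X L : ℝ} (hk : 2 ≤ k) (hkL : k ≤ 1.05 * L ^ 2)
    (hL : 1 ≤ L) (hXL : 56169 * L ^ 2 ≤ X) (hXp : 150 * X ^ 2 < p) :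
    ∃ Y : ℕ, 100 ≤ Y ∧ 2 * Y * (3 * k) ≤ ⌊30 * X⌋₊ ∧ ⌊30 * X⌋₊ * (2 * Y) < p ∧
      4.9 * X ≤ k * Y := by
  have hL₂ : 1 ≤ L ^ 2 := one_le_pow₀ hL
  have hX₀ : 0 ≤ X := by linarith
  have hfloor : (⌊30 * X⌋₊ : ℝ) ≤ 30 * X := Nat.floor_le (by positivity)
  set H := ⌊30 * X⌋₊
  set Y := H / (6 * k)
  have hYle : (6 * k * Y : ℝ) ≤ H := by exact_mod_cast Nat.mul_div_le H (6 * k)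
  have hkY : 4.9 * X ≤ k * Y := by
    have hYlt : (H : ℝ) < 6 * k * (Y + 1) := by exact_mod_cast Nat.lt_mul_div_succ H (by omega)
    linarith [Nat.lt_floor_add_one (30 * X)]
  have hk₂ : (2 : ℝ) ≤ k := by exact_mod_cast hk
  refine ⟨Y, ?_, ?_, ?_, hkY⟩
  · have : (100 : ℝ) ≤ Y := by
      by_contra! hlt
      nlinarith
    exact_mod_cast this
  · exact_mod_cast (by linarith : (2 * Y * (3 * k) : ℝ) ≤ H)
  · have hYX : (2 * Y : ℝ) ≤ 5 * X := by nlinarith [Y.cast_nonneg (α := ℝ)]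
    have : (H * (2 * Y) : ℝ) < p := by
      calc (H * (2 * Y) : ℝ) ≤ 30 * X * (5 * X) := by gcongr
        _ < p := by linarith
    exact_mod_cast this

lemma le_mul_sq_of_mul_le_mul {v L s h Y : ℝ} (hL : 0 < L) (hv : 0 ≤ v) (hs : 0 ≤ s)
    (hsh : s * h ^ 2 ≤ 0.7514 * L ^ 3) (hshY : 4.9 * (v * L ^ 2) ≤ s * h * Y) :
    31 * (v ^ 2 * L) ≤ s * Y ^ 2 := by
  refine le_of_mul_le_mul_left ?_ (show 0 < 0.7514 * L ^ 3 by positivity)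
  calc 0.7514 * L ^ 3 * (31 * (v ^ 2 * L)) = 23.2934 * (v * L ^ 2) ^ 2 := by ring
    _ ≤ (4.9 * (v * L ^ 2)) ^ 2 := by nlinarith [sq_nonneg (v * L ^ 2)]
    _ ≤ (s * h * Y) ^ 2 := by gcongr
    _ = s * h ^ 2 * (s * Y ^ 2) := by ring
    _ ≤ 0.7514 * L ^ 3 * (s * Y ^ 2) := by gcongr

lemma eight_mul_two_pow_add_lt {v L : ℝ} {g h : ℕ} (hv : 1 ≤ v) (hL : 43 ≤ L)
    (hgv : 2 * (g : ℝ) ≤ v ^ 4) (hgh : g < 2 * (h + 1) * 4 ^ (h + 1)) (hhL : h ≤ 0.7215 * L) :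
    8 * (2 ^ h + 4 * g) < 31 * (v ^ 2 * L) * 2 ^ h := by
  have hv₂ : 1 ≤ v ^ 2 := one_le_pow₀ hv
  have hg : (g : ℝ) ≤ 6 * L * (2 ^ h) ^ 2 := by
    have hg' : (g : ℝ) < 2 * (h + 1) * 4 ^ (h + 1) := by exact_mod_cast hgh
    calc (g : ℝ) ≤ 2 * (h + 1) * 4 ^ (h + 1) := hg'.le
      _ = 8 * (h + 1) * (2 ^ h) ^ 2 := by
          rw [pow_succ, ← pow_mul, mul_comm h 2, pow_mul]
          norm_num
          ring
      _ ≤ 8 * (0.75 * L) * (2 ^ h) ^ 2 := by gcongr; linarith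
      _ = 6 * L * (2 ^ h) ^ 2 := by ring
  have hgsq : (g : ℝ) < 0.9 * (v ^ 2 * L) * 2 ^ h := by
    refine lt_of_pow_lt_pow_left₀ 2 (by positivity) ?_
    calc (g : ℝ) ^ 2 = 2 * g * g / 2 := by ring
      _ ≤ v ^ 4 * (6 * L * (2 ^ h) ^ 2) / 2 := by gcongr
      _ = 3 * (v ^ 4 * L * (2 ^ h) ^ 2) := by ring
      _ < 0.81 * L * (v ^ 4 * L * (2 ^ h) ^ 2) := by gcongr; linarith
      _ = (0.9 * (v ^ 2 * L) * 2 ^ h) ^ 2 := by ring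
  have htwo : (2 : ℝ) ^ h ≤ v ^ 2 * L / 43 * 2 ^ h :=
    le_mul_of_one_le_left (by positivity) (by nlinarith)
  have : 0 < v ^ 2 * L * 2 ^ h := by positivity
  linarith

end Estimates

theorem exists_natCast_pow_ne_one {p g u : ℕ} [Fact p.Prime] (hp : 10 ^ 19 ≤ p) (hg : 0 < g)
    (hgp : 2 * g < p) (hu : u.Prime) :
    ∃ n : ℕ, 0 < n ∧ (n : ℝ) ≤ 30 * ((p : ℝ) ^ (1 / 4 : ℝ) * Real.log p ^ 2) ∧ ¬u ∣ n ∧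
      (n : ZMod p) ^ g ≠ 1 := by
  by_contra! hsmall
  have hpR : (10 : ℝ) ^ 19 ≤ p := by exact_mod_cast hp
  have hL := forty_three_le_log hpR
  have hv := le_rpow_one_fourth hpR
  have hXp := sq_rpow_one_fourth_mul_log_sq_lt hpR
  have hv₄ := rpow_one_fourth_pow_four p.cast_nonneg (x := (p : ℝ))
  set v := (p : ℝ) ^ (1 / 4 : ℝ)
  set L := Real.log p
  have hXL : 56169 * L ^ 2 ≤ v * L ^ 2 := by gcongr
  have hL₂ : 43 ^ 2 ≤ L ^ 2 := by gcongr
  set H := ⌊30 * (v * L ^ 2)⌋₊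
  have hpow (n : ℕ) (hn : 0 < n) (hnH : n ≤ H) (hnu : ¬u ∣ n) : (n : ZMod p) ^ g = 1 :=
    hsmall n hn ((Nat.le_floor_iff (by positivity)).mp hnH) hnu
  have hH : 128 ≤ H := Nat.le_floor (by push_cast; linarith)
  have hHp : H < p := (Nat.floor_lt (by positivity)).mpr
    (thirty_mul_rpow_one_fourth_mul_log_sq_lt hpR)
  have hg₆₄ : 64 ≤ g := by
    have := sub_div_le_of_forall_pow_eq_one hg hHp hpow
    have := Nat.div_le_div_left hu.two_le two_pos (a := H)
    omega
  obtain ⟨h, hh, hhg, hgh⟩ := exists_two_mul_mul_four_pow_le_and_lt hg₆₄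
  have hhL : (h : ℝ) ≤ 0.7215 * L := natCast_le_mul_log <| by
    exact_mod_cast (by nlinarith : 4 ^ h ≤ p)
  have hs : (stride u h : ℝ) ≤ 2 * h := by exact_mod_cast stride_le (by omega) u
  have hk := mul_le_of_le_two_mul h.cast_nonneg hs hhL
  have hsh := mul_sq_le_of_le_two_mul h.cast_nonneg hs hhL
  obtain ⟨Y, hY, hYH, hHY, hkY⟩ := exists_mul_mul_le_floor
    (hh.trans (Nat.le_mul_of_pos_left h (stride_pos hu.pos h))) (by exact_mod_cast hk) (by linarith)
    hXL hXp
  push_cast at hkY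
  have hupper : (stride u h * Y ^ 2 * 2 ^ h : ℝ) ≤ 8 * (2 ^ h + 4 * g) := by
    exact_mod_cast stride_mul_sq_mul_two_pow_le hu hpow hh hhg hgp hY hYH hHY hHp
  have hlower := le_mul_sq_of_mul_le_mul (by linarith) (by linarith) (Nat.cast_nonneg _) hsh hkY
  have hgap := eight_mul_two_pow_add_lt (v := v) (by linarith) hL
    (by rw [hv₄]; exact_mod_cast hgp.le) hgh hhL
  exact (hupper.trans_lt hgap).not_ge (by gcongr)

theorem q2_bound_unconditional_general {p : ℕ} [Fact p.Prime] (hp : 10 ^ 19 ≤ p) {R : Type*}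
    [CommMonoidWithZero R] [Nontrivial R] {χ : DirichletCharacter R p} (hχ : χ ≠ 1) {u : ℕ}
    (hu : u.Prime) :
    ∃ q : ℕ, q.Prime ∧ q ≠ u ∧ χ (q : ZMod p) ∉ ({0, 1} : Set R) ∧
      (q : ℝ) ≤ 30 * ((p : ℝ) ^ (1 / 4 : ℝ) * Real.log p ^ 2) := by
  obtain ⟨g, hg, hgp, hpow⟩ := exists_two_mul_lt_card_and_pow_eq_one hχ
  rw [ZMod.card] at hgp
  obtain ⟨n, hn, hnX, hnu, hne⟩ := exists_natCast_pow_ne_one hp hg hgp hu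
  have hnp : n < p := by
    exact_mod_cast hnX.trans_lt
      (thirty_mul_rpow_one_fourth_mul_log_sq_lt (by exact_mod_cast hp : (10 : ℝ) ^ 19 ≤ p))
  obtain ⟨q, hq, hqn, hχq⟩ : ∃ q : ℕ, q.Prime ∧ q ∣ n ∧ χ (q : ZMod p) ≠ 1 := by
    by_contra! hall
    exact hne (hpow _ (map_natCast_eq_one_of_forall_prime χ hn.ne' hall))
  have hqle := Nat.le_of_dvd hn hqn
  have hq₀ : (q : ZMod p) ≠ 0 := fun h => Nat.not_dvd_of_pos_of_lt hq.pos (hqle.trans_lt hnp)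
    ((ZMod.natCast_eq_zero_iff q p).mp h)
  refine ⟨q, hq, fun h => hnu (h ▸ hqn), ?_, ?_⟩
  · exact not_or.mpr ⟨((isUnit_iff_ne_zero.mpr hq₀).map χ).ne_zero, hχq⟩
  · exact (Nat.cast_le.mpr hqle).trans hnX

theorem q2_bound_unconditional (p : ℕ) [Fact p.Prime] (hp : (10:ℕ)^19 ≤ p)
    (χ : DirichletCharacter ℂ p) (hχ : χ ≠ 1)
    (q₁ q₂ : ℕ) (hq₁ : q₁.Prime) (hq₂ : q₂.Prime) (hlt : q₁ < q₂)
    (hnr₁ : χ (q₁ : ZMod p) ∉ ({0, 1} : Set ℂ))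
    (hnr₂ : χ (q₂ : ZMod p) ∉ ({0, 1} : Set ℂ))
    (hmin₁ : ∀ q : ℕ, q.Prime → χ (q : ZMod p) ∉ ({0, 1} : Set ℂ) → q₁ ≤ q)
    (hmin₂ : ∀ q : ℕ, q.Prime → χ (q : ZMod p) ∉ ({0, 1} : Set ℂ) → q ≠ q₁ → q₂ ≤ q) :
    (q₂ : ℝ) < 53 * (p : ℝ) ^ ((1:ℝ)/4) * (Real.log p) ^ 2 := by
  obtain ⟨q, hq, hqq₁, hχq, hle⟩ := q2_bound_unconditional_general hp hχ hq₁
  have hq₂q : (q₂ : ℝ) ≤ q := by exact_mod_cast hmin₂ q hq hχq hqq₁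
  have hq₂pos : (0 : ℝ) < q₂ := by exact_mod_cast hq₂.pos
  linarith
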